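/- Let N ≥ 3, let V satisfy condition (V) and the decay condition that there exist A, α > 0 with V⁺(x) ≤ A|x|^{-2-α} for all x ∈ ℝ^N, let f satisfy conditions (f1), (f2), (f3), let λ > 0, and let u and v be two solutions of problem (P_λ). Then the boundary flux integral tends to zero: lim_{R→∞} ∫_{∂B_R} u(x) ∂v/∂ν(x) dσ(x) = 0, where ∂B_R is the sphere {|x| = R}, dσ is its surface measure, and ∂v/∂ν(x) = ⟨∇v(x), x/|x|⟩ is the outward normal derivative. -/

import Mathlib

open MeasureTheory Filter Metric Set
open scoped ENNReal NNReal Topology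

noncomputable section

/-- Euclidean space `ℝ^N`. -/
abbrev Euc (N : ℕ) := EuclideanSpace ℝ (Fin N)

/-- The Laplace operator on `ℝ^N`: the sum of the second partial derivatives. -/
def lap (N : ℕ) (u : Euc N → ℝ) (x : Euc N) : ℝ :=
  ∑ i : Fin N,
    fderiv ℝ (fun y => fderiv ℝ u y (EuclideanSpace.single i 1)) x (EuclideanSpace.single i 1)

/-- The principal eigenvalue `λ₁(R)`: the infimum of `∫_{B_R} |∇u|²` over smooth functions
compactly supported in the open ball `B_R` with `∫_{B_R} V u² = 1`. -/
def lam1 (N : ℕ) (V : Euc N → ℝ) (R : ℝ) : ℝ :=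
  sInf { t : ℝ | ∃ u : Euc N → ℝ, ContDiff ℝ (⊤ : ℕ∞) u ∧ HasCompactSupport u ∧
    tsupport u ⊆ ball (0 : Euc N) R ∧
    (∫ x, V x * u x ^ 2) = 1 ∧ t = ∫ x, ‖gradient u x‖ ^ 2 }

/-- `Λ := lim_{R → ∞} λ₁(R)`. -/
def Lam (N : ℕ) (V : Euc N → ℝ) : ℝ := limUnder atTop (lam1 N V)

/-- Condition (V): `V` is a bounded Hölder-continuous function whose positive part
`V⁺ = max(V, 0)` is nontrivial and decomposes as `V₁ + V₂` with `V₁ ∈ L^{N/2}` and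
`|x|² V₂(x) → 0` as `|x| → ∞`. -/
def CondV (N : ℕ) (V V₁ V₂ : Euc N → ℝ) : Prop :=
  (∃ C β : ℝ≥0, 0 < β ∧ β ≤ 1 ∧ HolderWith C β V) ∧
  (∃ C : ℝ, ∀ x, |V x| ≤ C) ∧
  (∃ x, 0 < V x) ∧
  (∀ x, max (V x) 0 = V₁ x + V₂ x) ∧
  MemLp V₁ ((N : ℝ≥0∞) / 2) volume ∧
  Tendsto (fun x : Euc N => ‖x‖ ^ 2 * V₂ x) (cocompact _) (𝓝 0)

/-- The decay condition: `V⁺(x) ≤ A |x|^{-2-α}`. -/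
def CondVDecay (N : ℕ) (V : Euc N → ℝ) : Prop :=
  ∃ A α : ℝ, 0 < A ∧ 0 < α ∧
    ∀ x : Euc N, x ≠ 0 → max (V x) 0 ≤ A * ‖x‖ ^ (-2 - α)

/-- Conditions (f1), (f2), (f3) on the absorption term `f`. -/
def CondF (N : ℕ) (V : Euc N → ℝ) (f : ℝ → ℝ) : Prop :=
  ContDiff ℝ 1 f ∧ (∀ u : ℝ, 0 ≤ u → 0 ≤ f u) ∧
  -- (f1)
  f 0 = 0 ∧ deriv f 0 = 0 ∧
  0 < Filter.liminf (fun u : ℝ => ((deriv f u / u : ℝ) : EReal)) (𝓝[>] (0 : ℝ)) ∧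
  -- (f2)
  StrictMonoOn (fun u : ℝ => f u / u) (Ioi 0) ∧
  -- (f3)
  (∃ L : EReal, Tendsto (fun u : ℝ => ((f u / u : ℝ) : EReal)) atTop (𝓝 L) ∧
    ((⨆ x, |V x| : ℝ) : EReal) < L)

/-- A solution of problem `(P_λ)`: a positive `C²` function solving the logistic equation
and decaying to zero at infinity. -/
structure IsSolution (N : ℕ) (V : Euc N → ℝ) (f : ℝ → ℝ) (lam : ℝ) (u : Euc N → ℝ) : Prop where
  smooth : ContDiff ℝ 2 u
  pos : ∀ x, 0 < u x
  eqn : ∀ x, -lap N u x = lam * (V x * u x - f (u x))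
  decay : Tendsto u (cocompact (Euc N)) (𝓝 0)

/-- The surface integral `∫_{∂B_R} g dσ` over the sphere of radius `R`, written in polar
coordinates with respect to the canonical surface measure on the unit sphere. -/
def sphereInt (N : ℕ) (g : Euc N → ℝ) (R : ℝ) : ℝ :=
  ∫ ω : sphere (0 : Euc N) 1, g (R • (ω : Euc N)) * R ^ (N - 1)
    ∂((volume : Measure (Euc N)).toSphere)

/-!
Comparison with a multiple of `|x|^{-s}`, `s < N - 2`, shows that solutions decay fast enough for
`V⁺ u v` and `u² / |x|²` to be integrable. The divergence theorem for `u ∇u` on the ball `B_R` reads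
`∫_{B_R} (|∇u|² + u Δu) = ∫_{∂B_R} u ∂u/∂ν`, and up to a positive factor the right-hand side is the
`R`-derivative of the spherical mean of `u²`. This mean tends to zero and is nonnegative, so its
derivative is nonpositive at arbitrarily large `R`. Hence `|∇u|²` and `u Δu` are integrable.

Since `f(t)/t` is monotone, `u Δv ≤ |u Δu| + |v Δv|`, so `X = u ∇v` has integrable divergence and
its flux through `∂B_R` converges as `R → ∞`. As `|X| / (1 + |x|) ≤ u² / (1 + |x|)² + |∇v|²` is
integrable, the flux divided by `R` is integrable at infinity, which forces the limit to be zero.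
-/

open InnerProductSpace Laplacian

section MaximumPrinciple

variable {E : Type*} [NormedAddCommGroup E] [InnerProductSpace ℝ E]

lemma deriv_deriv_nonpos_of_isLocalMax {g : ℝ → ℝ} {a : ℝ} (hg : ContinuousAt g a)
    (hmax : IsLocalMax g a) : deriv (deriv g) a ≤ 0 := by
  by_contra! hpos
  have hmin : IsLocalMin g a := isLocalMin_of_deriv_deriv_pos hpos hmax.deriv_eq_zero hg
  have hconst : g =ᶠ[𝓝 a] fun _ => g a := by
    filter_upwards [hmax, hmin] with τ h₁ h₂ using le_antisymm h₁ h₂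
  have hderiv : deriv g =ᶠ[𝓝 a] fun _ => 0 := by simpa using hconst.deriv
  simp [hderiv.deriv_eq] at hpos

lemma fderiv_fderiv_apply_self_nonpos_of_isLocalMax {f : E → ℝ} {x : E}
    (hf : ContDiffAt ℝ 2 f x) (hmax : IsLocalMax f x) (e : E) :
    fderiv ℝ (fderiv ℝ f) x e e ≤ 0 := by
  have hline : ∀ τ : ℝ, HasDerivAt (fun τ : ℝ => x + τ • e) e τ := fun τ => by
    simpa using ((hasDerivAt_id τ).smul_const e).const_add x
  have htendsto : Tendsto (fun τ : ℝ => x + τ • e) (𝓝 0) (𝓝 x) := by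
    simpa using (hline 0).continuousAt.tendsto
  have hderiv : deriv (fun τ : ℝ => f (x + τ • e)) =ᶠ[𝓝 0] fun τ => fderiv ℝ f (x + τ • e) e := by
    filter_upwards [htendsto.eventually (hf.eventually (by simp))] with τ hτ
    exact ((hτ.differentiableAt (by simp)).hasFDerivAt.comp_hasDerivAt τ (hline τ)).deriv
  have hderiv₂ : deriv (deriv fun τ : ℝ => f (x + τ • e)) 0 = fderiv ℝ (fderiv ℝ f) x e e := by
    have hd : HasFDerivAt (fderiv ℝ f) (fderiv ℝ (fderiv ℝ f) x) x :=
      ((hf.fderiv_right (m := 1) (by norm_num)).differentiableAt (by simp)).hasFDerivAt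
    have hde := (ContinuousLinearMap.apply ℝ ℝ e).hasFDerivAt.comp x hd
    rw [hderiv.deriv_eq]
    exact (hde.comp_hasDerivAt_of_eq 0 (hline 0) (by simp)).deriv
  rw [← hderiv₂]
  have hcont : ContinuousAt f (x + (0 : ℝ) • e) := by simpa using hf.continuousAt
  refine deriv_deriv_nonpos_of_isLocalMax
    (ContinuousAt.comp (f := fun τ : ℝ => x + τ • e) hcont (hline 0).continuousAt) ?_
  simpa [IsLocalMax, IsMaxFilter] using htendsto.eventually hmax

variable [FiniteDimensional ℝ E]

lemma laplacian_eq_sum_fderiv_fderiv {ι : Type*} [Fintype ι] (b : OrthonormalBasis ι ℝ E)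
    (f : E → ℝ) (x : E) : Δ f x = ∑ i, fderiv ℝ (fderiv ℝ f) x (b i) (b i) := by
  rw [laplacian_eq_iteratedFDeriv_orthonormalBasis f b]
  exact Finset.sum_congr rfl fun i _ => by simp [iteratedFDeriv_two_apply]

lemma laplacian_nonpos_of_isLocalMax {f : E → ℝ} {x : E} (hf : ContDiffAt ℝ 2 f x)
    (hmax : IsLocalMax f x) : Δ f x ≤ 0 := by
  rw [laplacian_eq_sum_fderiv_fderiv (stdOrthonormalBasis ℝ E)]
  exact Finset.sum_nonpos fun _ _ => fderiv_fderiv_apply_self_nonpos_of_isLocalMax hf hmax _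

lemma laplacian_add_smul {f g : E → ℝ} {x : E} (hf : ContDiffAt ℝ 2 f x)
    (hg : ContDiffAt ℝ 2 g x) (a : ℝ) : Δ (f + a • g) x = Δ f x + a * Δ g x := by
  have hag : ContDiffAt ℝ 2 (a • g) x := hg.const_smul a
  rw [hf.laplacian_add hag, laplacian_smul _ hg, smul_eq_mul]

theorem le_of_strict_supersolution {S : Set E} (hS : IsClosed S) {u φ c : E → ℝ}
    (hu : ∀ x ∈ S, ContDiffAt ℝ 2 u x) (hφ : ∀ x ∈ S, ContDiffAt ℝ 2 φ x)
    (hφ_pos : ∀ x ∈ S, 0 < φ x)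
    (hu_sub : ∀ x ∈ S, -Δ u x ≤ c x * u x) (hφ_super : ∀ x ∈ S, c x * φ x < -Δ φ x)
    (hfrontier : ∀ x ∈ frontier S, u x ≤ φ x) (hinfty : ∀ᶠ x in cocompact E, x ∈ S → u x ≤ φ x) :
    ∀ x ∈ S, u x ≤ φ x := by
  by_contra! ⟨x₁, hx₁, hlt⟩
  have hquot : ContinuousOn (fun x => u x / φ x) S := fun x hx =>
    ((hu x hx).continuousAt.div (hφ x hx).continuousAt (hφ_pos x hx).ne').continuousWithinAt
  have hx₁_quot : 1 < u x₁ / φ x₁ := (one_lt_div (hφ_pos x₁ hx₁)).2 hlt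
  obtain ⟨x₀, hx₀, hmax⟩ := hquot.exists_isMaxOn' hS hx₁ <| by
    filter_upwards [hinfty.filter_mono inf_le_left, mem_inf_of_right (mem_principal_self S)]
      with x hx hxS
    exact ((div_le_one (hφ_pos x hxS)).2 (hx hxS)).trans hx₁_quot.le
  set T := u x₀ / φ x₀
  have hT_one : 1 < T := hx₁_quot.trans_le (hmax hx₁)
  have hu_eq : u x₀ = T * φ x₀ := (div_mul_cancel₀ _ (hφ_pos x₀ hx₀).ne').symm
  have hx₀_int : x₀ ∈ interior S := by
    by_contra hx₀_int
    have hle := hfrontier x₀ (hS.frontier_eq ▸ ⟨hx₀, hx₀_int⟩)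
    nlinarith [hφ_pos x₀ hx₀]
  have hlocal : IsLocalMax (u + (-T) • φ) x₀ := by
    filter_upwards [mem_interior_iff_mem_nhds.1 hx₀_int] with x hx
    have hle : u x ≤ T * φ x := (div_le_iff₀ (hφ_pos x hx)).1 (hmax hx)
    simp only [Pi.add_apply, Pi.smul_apply, smul_eq_mul]
    linarith
  have hsmooth : ContDiffAt ℝ 2 (u + (-T) • φ) x₀ :=
    (hu x₀ hx₀).add ((hφ x₀ hx₀).const_smul (-T))
  have hlap := laplacian_nonpos_of_isLocalMax hsmooth hlocal
  rw [laplacian_add_smul (hu x₀ hx₀) (hφ x₀ hx₀)] at hlap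
  have hsuper := mul_lt_mul_of_pos_left (hφ_super x₀ hx₀) (one_pos.trans hT_one)
  have hsub := hu_sub x₀ hx₀
  rw [hu_eq] at hsub
  linarith

theorem le_of_supersolution_of_tendsto_zero {S : Set E} (hS : IsClosed S) {u φ ψ c : E → ℝ}
    (hu : ∀ x ∈ S, ContDiffAt ℝ 2 u x) (hφ : ∀ x ∈ S, ContDiffAt ℝ 2 φ x)
    (hψ : ∀ x ∈ S, ContDiffAt ℝ 2 ψ x) (hφ_nonneg : ∀ x ∈ S, 0 ≤ φ x) (hψ_one : ∀ x ∈ S, 1 ≤ ψ x)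
    (hu_sub : ∀ x ∈ S, -Δ u x ≤ c x * u x) (hφ_super : ∀ x ∈ S, c x * φ x ≤ -Δ φ x)
    (hψ_super : ∀ x ∈ S, c x * ψ x < -Δ ψ x)
    (hfrontier : ∀ x ∈ frontier S, u x ≤ φ x) (hinfty : Tendsto u (cocompact E) (𝓝 0)) :
    ∀ x ∈ S, u x ≤ φ x := by
  have hperturbed : ∀ ε : ℝ, 0 < ε → ∀ x ∈ S, u x ≤ (φ + ε • ψ) x := by
    intro ε hε
    have hge : ∀ x ∈ S, φ x + ε ≤ (φ + ε • ψ) x := fun x hx => by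
      simpa using le_mul_of_one_le_right hε.le (hψ_one x hx)
    refine le_of_strict_supersolution (c := c) hS hu
      (fun x hx => (hφ x hx).add ((hψ x hx).const_smul ε))
      (fun x hx => by linarith [hge x hx, hφ_nonneg x hx]) hu_sub (fun x hx => ?_)
      (fun x hx => by
        linarith [hge x (hS.frontier_subset hx), hfrontier x hx]) ?_
    · rw [laplacian_add_smul (hφ x hx) (hψ x hx)]
      simp only [Pi.add_apply, Pi.smul_apply, smul_eq_mul]
      linarith [hφ_super x hx, mul_lt_mul_of_pos_left (hψ_super x hx) hε]
    · filter_upwards [hinfty.eventually (gt_mem_nhds hε)] with x hx hxS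
      linarith [hge x hxS, hφ_nonneg x hxS]
  intro x hx
  have hlim : Tendsto (fun ε : ℝ => (φ + ε • ψ) x) (𝓝[>] 0) (𝓝 (φ x)) := by
    have hcont : Continuous fun ε : ℝ => (φ + ε • ψ) x := by
      simp only [Pi.add_apply, Pi.smul_apply]
      fun_prop
    simpa using (hcont.tendsto 0).mono_left nhdsWithin_le_nhds
  exact ge_of_tendsto hlim (eventually_mem_nhdsWithin.mono fun ε hε => hperturbed ε hε x hx)

end MaximumPrinciple

section Decay

variable {E : Type*} [NormedAddCommGroup E] [InnerProductSpace ℝ E]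

lemma contDiffAt_norm_rpow {x : E} (hx : x ≠ 0) (p : ℝ) {n : WithTop ℕ∞} :
    ContDiffAt ℝ n (fun y : E => ‖y‖ ^ p) x :=
  (contDiffAt_norm ℝ hx).rpow_const_of_ne (norm_ne_zero_iff.2 hx)

lemma hasFDerivAt_norm_rpow_of_ne_zero {x : E} (hx : x ≠ 0) (p : ℝ) :
    HasFDerivAt (fun y : E => ‖y‖ ^ p) ((p * ‖x‖ ^ (p - 2)) • innerSL ℝ x) x := by
  have hsq : HasFDerivAt (fun y : E => (‖y‖ ^ 2) ^ (p / 2))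
      ((p / 2 * (‖x‖ ^ 2) ^ (p / 2 - 1)) • (2 • innerSL ℝ x)) x :=
    (hasStrictFDerivAt_norm_sq x).hasFDerivAt.rpow_const (Or.inl (by positivity))
  have hpow : ∀ (y : E) (q : ℝ), (‖y‖ ^ 2) ^ q = ‖y‖ ^ (2 * q) := fun y q => by
    rw [Real.rpow_mul (norm_nonneg y), Real.rpow_two]
  simp only [hpow, mul_div_cancel₀ p two_ne_zero, mul_sub, mul_one] at hsq
  refine hsq.congr_fderiv ?_
  ext e
  simp only [_root_.smul_apply, smul_eq_mul, nsmul_eq_mul]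
  ring

variable [FiniteDimensional ℝ E]

theorem laplacian_norm_rpow {x : E} (hx : x ≠ 0) (p : ℝ) :
    Δ (fun y : E => ‖y‖ ^ p) x = p * (p + Module.finrank ℝ E - 2) * ‖x‖ ^ (p - 2) := by
  have hx_pos : 0 < ‖x‖ := norm_pos_iff.2 hx
  obtain ⟨L, hL⟩ : ∃ L : E →L[ℝ] E →L[ℝ] ℝ, ∀ y, L y = innerSL ℝ y := ⟨innerSL ℝ, fun _ => rfl⟩
  have hfderiv : fderiv ℝ (fun y : E => ‖y‖ ^ p) =ᶠ[𝓝 x] fun y => (p * ‖y‖ ^ (p - 2)) • L y := by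
    filter_upwards [eventually_ne_nhds hx] with y hy
    rw [hL, (hasFDerivAt_norm_rpow_of_ne_zero hy p).fderiv]
  have hsecond : HasFDerivAt (fun y : E => (p * ‖y‖ ^ (p - 2)) • L y) _ x :=
    ((hasFDerivAt_norm_rpow_of_ne_zero hx (p - 2)).const_mul p).smul L.hasFDerivAt
  have hpow : ‖x‖ ^ (p - 2 - 2) * ‖x‖ ^ 2 = ‖x‖ ^ (p - 2) := by
    rw [← Real.rpow_two, ← Real.rpow_add hx_pos, sub_add_cancel]
  set b := stdOrthonormalBasis ℝ E
  have hterm : ∀ i, fderiv ℝ (fderiv ℝ fun y : E => ‖y‖ ^ p) x (b i) (b i) =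
      p * ‖x‖ ^ (p - 2) + p * (p - 2) * ‖x‖ ^ (p - 2 - 2) * inner ℝ x (b i) ^ 2 := fun i => by
    rw [hfderiv.fderiv_eq, hsecond.fderiv]
    simp only [add_apply, _root_.smul_apply, ContinuousLinearMap.smulRight_apply, hL,
      innerSL_apply_apply, smul_eq_mul, real_inner_self_eq_norm_sq, b.norm_eq_one]
    ring
  rw [laplacian_eq_sum_fderiv_fderiv b]
  simp_rw [hterm, Finset.sum_add_distrib, ← Finset.mul_sum, b.sum_sq_inner_left x]
  rw [mul_assoc _ _ (‖x‖ ^ 2), hpow]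
  simp
  ring

lemma eventually_const_mul_norm_rpow_lt {p q a A : ℝ} (hpq : p < q) (ha : 0 < a) :
    ∀ᶠ x in cocompact E, A * ‖x‖ ^ p < a * ‖x‖ ^ q := by
  have hlim : Tendsto (fun x : E => A * ‖x‖ ^ (-(q - p))) (cocompact E) (𝓝 0) := by
    simpa using ((tendsto_rpow_neg_atTop (sub_pos.2 hpq)).comp
      (tendsto_norm_cocompact_atTop (E := E))).const_mul A
  filter_upwards [hlim.eventually (gt_mem_nhds ha),
    tendsto_norm_cocompact_atTop.eventually_gt_atTop 0] with x hx hx_pos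
  calc A * ‖x‖ ^ p = A * ‖x‖ ^ (-(q - p)) * ‖x‖ ^ q := by
        rw [mul_assoc, ← Real.rpow_add hx_pos, neg_sub, sub_add_cancel]
    _ < a * ‖x‖ ^ q := by gcongr

lemma eventually_const_mul_norm_rpow_lt_neg_laplacian {p t : ℝ} (ht : 0 < t)
    (htn : t < Module.finrank ℝ E - 2) (hp : p < -t - 2) (A : ℝ) :
    ∀ᶠ x in cocompact E, A * ‖x‖ ^ p < -Δ (fun y : E => ‖y‖ ^ (-t)) x := by
  filter_upwards [eventually_const_mul_norm_rpow_lt (A := A) hp (mul_pos ht (sub_pos.2 htn)),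
    tendsto_norm_cocompact_atTop.eventually_gt_atTop 0] with x hx hx_pos
  rw [laplacian_norm_rpow (norm_pos_iff.1 hx_pos)]
  linarith

lemma exists_eventually_const_mul_one_add_lt_neg_laplacian {α : ℝ} (hα : 0 < α)
    (hn : 2 < Module.finrank ℝ E) (A : ℝ) :
    ∃ t : ℝ, ∀ᶠ x in cocompact E, A * ‖x‖ ^ (-2 - α) * (1 + ‖x‖ ^ (-t)) <
      -Δ (fun y : E => 1 + ‖y‖ ^ (-t)) x := by
  have hn' : (0 : ℝ) < Module.finrank ℝ E - 2 := sub_pos.2 (by exact_mod_cast hn)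
  obtain ⟨t, ht, htlt⟩ := exists_between (lt_min hα hn')
  obtain ⟨htα, htn⟩ := lt_min_iff.1 htlt
  refine ⟨t, ?_⟩
  filter_upwards [eventually_const_mul_norm_rpow_lt_neg_laplacian ht htn (p := -2 - α)
    (by linarith) (|A| * 2), tendsto_norm_cocompact_atTop.eventually_ge_atTop 1] with x hx hx_one
  have hle_one : ‖x‖ ^ (-t) ≤ 1 := Real.rpow_le_one_of_one_le_of_nonpos hx_one (by linarith)
  have hx_ne : x ≠ 0 := norm_pos_iff.1 (one_pos.trans_le hx_one)
  have hΔ : Δ (fun y : E => 1 + ‖y‖ ^ (-t)) x = Δ (fun y : E => ‖y‖ ^ (-t)) x :=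
    (ContDiffAt.laplacian_add (f₁ := fun _ : E => (1 : ℝ)) contDiffAt_const
      (contDiffAt_norm_rpow hx_ne (-t))).trans (by simp)
  rw [hΔ]
  calc A * ‖x‖ ^ (-2 - α) * (1 + ‖x‖ ^ (-t)) ≤ |A| * ‖x‖ ^ (-2 - α) * (1 + 1) := by
        gcongr
        exact le_abs_self A
    _ = |A| * 2 * ‖x‖ ^ (-2 - α) := by ring
    _ < _ := hx

lemma exists_forall_of_eventually_cocompact {P : E → Prop} (hP : ∀ᶠ x in cocompact E, P x) :
    ∃ R : ℝ, 0 < R ∧ ∀ x, R ≤ ‖x‖ → P x := by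
  rw [← cobounded_eq_cocompact, ← comap_norm_atTop, eventually_comap] at hP
  obtain ⟨R, hR⟩ := (hP.and (eventually_gt_atTop 0)).exists_forall_of_atTop
  exact ⟨R, (hR R le_rfl).2, fun x hx => (hR _ hx).1 x rfl⟩

theorem exists_eventually_le_norm_rpow_neg {u : E → ℝ} {A α s : ℝ} (hα : 0 < α) (hs : 0 < s)
    (hsn : s < Module.finrank ℝ E - 2) (hu : ContDiff ℝ 2 u)
    (hu_sub : ∀ᶠ x in cocompact E, -Δ u x ≤ A * ‖x‖ ^ (-2 - α) * u x)
    (hu_zero : Tendsto u (cocompact E) (𝓝 0)) :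
    ∃ C : ℝ, ∀ᶠ x in cocompact E, u x ≤ C * ‖x‖ ^ (-s) := by
  have hn : 2 < Module.finrank ℝ E := by exact_mod_cast sub_pos.1 (hs.trans hsn)
  obtain ⟨t, hbarrier⟩ :=
    exists_eventually_const_mul_one_add_lt_neg_laplacian (E := E) hα hn A
  obtain ⟨R, hR, hfar⟩ := exists_forall_of_eventually_cocompact <| hu_sub.and <|
    (eventually_const_mul_norm_rpow_lt_neg_laplacian hs hsn (p := -2 - α - s)
      (by linarith) A).and hbarrier
  have hne : ∀ x ∈ {x : E | R ≤ ‖x‖}, x ≠ 0 := fun x hx => norm_pos_iff.1 (hR.trans_le hx)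
  obtain ⟨M, hM⟩ := (isCompact_sphere (0 : E) R).bddAbove_image hu.continuous.continuousOn
  have hC : 0 ≤ |M| * R ^ s := by positivity
  refine ⟨|M| * R ^ s, ?_⟩
  have hcompare := le_of_supersolution_of_tendsto_zero (c := fun x => A * ‖x‖ ^ (-2 - α))
    (φ := (|M| * R ^ s) • fun x => ‖x‖ ^ (-s)) (ψ := fun x => 1 + ‖x‖ ^ (-t))
    (isClosed_le continuous_const continuous_norm) (fun x _ => hu.contDiffAt)
    (fun x hx => (contDiffAt_norm_rpow (hne x hx) (-s)).const_smul (|M| * R ^ s))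
    (fun x hx => contDiffAt_const.add (contDiffAt_norm_rpow (hne x hx) _))
    (fun x _ => mul_nonneg hC (by positivity)) (fun x _ => le_add_of_nonneg_right (by positivity))
    (fun x hx => (hfar x hx).1) ?_ (fun x hx => (hfar x hx).2.2) ?_ hu_zero
  · exact (tendsto_norm_cocompact_atTop.eventually_ge_atTop R).mono hcompare
  · intro x hx
    have hx_pos : 0 < ‖x‖ := hR.trans_le hx
    have hpower : A * (‖x‖ ^ (-2 - α) * ‖x‖ ^ (-s)) < -Δ (fun y : E => ‖y‖ ^ (-s)) x := by
      simpa only [← Real.rpow_add hx_pos, ← sub_eq_add_neg] using (hfar x hx).2.1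
    rw [laplacian_smul _ (contDiffAt_norm_rpow (hne x hx) (-s))]
    simp only [Pi.smul_apply, smul_eq_mul]
    linarith [mul_le_mul_of_nonneg_left hpower.le hC]
  · intro x hx
    have hx_norm : ‖x‖ = R := (frontier_le_subset_eq continuous_const continuous_norm hx).symm
    have hx_le : u x ≤ |M| := (hM ⟨x, by simpa using hx_norm, rfl⟩).trans (le_abs_self M)
    simpa [hx_norm, mul_assoc, ← Real.rpow_add hR] using hx_le

end Decay

section Divergence

variable {E : Type*} [NormedAddCommGroup E] [InnerProductSpace ℝ E]

/-- The divergence of a vector field, as the trace of its derivative (`0` where the field is not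
differentiable). -/
def divergence (X : E → E) (x : E) : ℝ :=
  LinearMap.trace ℝ E (fderiv ℝ X x)

lemma divergence_eq_sum_inner {ι : Type*} [Fintype ι] (b : OrthonormalBasis ι ℝ E)
    (X : E → E) (x : E) : divergence X x = ∑ i, inner ℝ (b i) (fderiv ℝ X x (b i)) :=
  LinearMap.trace_eq_sum_inner _ b

variable [FiniteDimensional ℝ E]

lemma divergence_smul {ζ : E → ℝ} {X : E → E} {x : E} (hζ : DifferentiableAt ℝ ζ x)
    (hX : DifferentiableAt ℝ X x) :
    divergence (fun y => ζ y • X y) x = fderiv ℝ ζ x (X x) + ζ x * divergence X x := by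
  rw [divergence, fderiv_fun_smul hζ hX, ContinuousLinearMap.toLinearMap_add, map_add, add_comm]
  exact congrArg₂ _ (LinearMap.trace_smulRight _ _) (map_smul _ _ _)

lemma continuous_divergence {X : E → E} (hX : ContDiff ℝ 1 X) : Continuous (divergence X) := by
  rw [funext (divergence_eq_sum_inner (stdOrthonormalBasis ℝ E) X)]
  have := hX.continuous_fderiv one_ne_zero
  fun_prop

lemma contDiff_gradient {v : E → ℝ} {n : WithTop ℕ∞} (hv : ContDiff ℝ (n + 1) v) :
    ContDiff ℝ n (gradient v) :=
  (toDual ℝ E).symm.contDiff.comp (hv.fderiv_right le_rfl)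

lemma gradient_sq_div_two {u : E → ℝ} {x : E} (hu : DifferentiableAt ℝ u x) :
    gradient (fun x => u x ^ 2 / 2) x = u x • gradient u x := by
  have hderiv : HasFDerivAt (fun x => u x ^ 2 / 2) (u x • fderiv ℝ u x) x := by
    refine ((hu.hasFDerivAt.pow 2).mul_const 2⁻¹).congr_fderiv ?_
    ext e
    simp
    ring
  rw [gradient, hderiv.fderiv, map_smul, gradient]

lemma divergence_gradient {v : E → ℝ} {x : E} (hv : DifferentiableAt ℝ (fderiv ℝ v) x) :
    divergence (gradient v) x = Δ v x := by
  have hderiv : HasFDerivAt (gradient v) _ x :=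
    ((toDual ℝ E).symm.toContinuousLinearEquiv.hasFDerivAt).comp x hv.hasFDerivAt
  rw [divergence_eq_sum_inner (stdOrthonormalBasis ℝ E),
    laplacian_eq_sum_fderiv_fderiv (stdOrthonormalBasis ℝ E), hderiv.fderiv]
  refine Finset.sum_congr rfl fun i _ => ?_
  rw [real_inner_comm]
  exact toDual_symm_apply

lemma continuous_laplacian {v : E → ℝ} (hv : ContDiff ℝ 2 v) : Continuous (Δ v) := by
  have hv' : Differentiable ℝ (fderiv ℝ v) :=
    (hv.fderiv_right le_rfl).differentiable one_ne_zero
  rw [show Δ v = divergence (gradient v) from funext fun x => (divergence_gradient (hv' x)).symm]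
  exact continuous_divergence (contDiff_gradient hv)

lemma divergence_smul_gradient {u v : E → ℝ} (hu : Differentiable ℝ u) (hv : ContDiff ℝ 2 v)
    (x : E) : divergence (fun y => u y • gradient v y) x =
      inner ℝ (gradient u x) (gradient v x) + u x * Δ v x := by
  have hv' : ContDiff ℝ 1 (fderiv ℝ v) := hv.fderiv_right (by norm_num)
  rw [divergence_smul (hu x)
    ((contDiff_gradient (n := 1) hv).differentiable one_ne_zero x),
    divergence_gradient (hv'.differentiable one_ne_zero x), inner_gradient_left]

variable [MeasurableSpace E] [BorelSpace E]

lemma integral_fderiv_apply_eq_zero {μ : Measure E} [μ.IsAddHaarMeasure] {F : Type*}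
    [NormedAddCommGroup F] [NormedSpace ℝ F] {Y : E → F} (hY : ContDiff ℝ 1 Y)
    (hY_supp : HasCompactSupport Y) (e : E) : ∫ x, fderiv ℝ Y x e ∂μ = 0 := by
  have hY' : Continuous (fderiv ℝ Y) := hY.continuous_fderiv one_ne_zero
  have h_int : Integrable (fun x => fderiv ℝ Y x e) μ :=
    (hY'.clm_apply continuous_const).integrable_of_hasCompactSupport (hY_supp.fderiv_apply ℝ e)
  simpa using integral_smul_fderiv_eq_neg_fderiv_smul_of_integrable (μ := μ)
    (f := fun _ => (1 : ℝ)) (g := Y) (v := e) (by simp) (by simpa using h_int)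
    (by simpa using hY.continuous.integrable_of_hasCompactSupport hY_supp)
    (fun _ _ => differentiableAt_const _) (fun x _ => hY.differentiable one_ne_zero x)

theorem integral_divergence_eq_zero {μ : Measure E} [μ.IsAddHaarMeasure] {Y : E → E}
    (hY : ContDiff ℝ 1 Y) (hY_supp : HasCompactSupport Y) : ∫ x, divergence Y x ∂μ = 0 := by
  set b := stdOrthonormalBasis ℝ E
  have hY' : Continuous (fderiv ℝ Y) := hY.continuous_fderiv one_ne_zero
  have h_int : ∀ i, Integrable (fun x => fderiv ℝ Y x (b i)) μ := fun i =>
    (hY'.clm_apply continuous_const).integrable_of_hasCompactSupport (hY_supp.fderiv_apply ℝ (b i))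
  rw [funext (divergence_eq_sum_inner b Y), integral_finsetSum _ fun i _ => (h_int i).const_inner _]
  refine Finset.sum_eq_zero fun i _ => ?_
  rw [integral_inner (h_int i), integral_fderiv_apply_eq_zero hY hY_supp, inner_zero_right]

end Divergence

section PolarCoordinates

variable {E F : Type*} [NormedAddCommGroup E] [NormedSpace ℝ E] [FiniteDimensional ℝ E]
  [MeasurableSpace E] [BorelSpace E] [NormedAddCommGroup F] {μ : Measure E} [μ.IsAddHaarMeasure]

lemma integrable_comp_smul_sphere {k : E → F} (hk : Integrable k μ) :
    Integrable (fun p : sphere (0 : E) 1 × Ioi (0 : ℝ) => k (p.2.1 • p.1.1))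
      (μ.toSphere.prod (.volumeIoiPow (Module.finrank ℝ E - 1))) := by
  refine (μ.measurePreserving_homeomorphUnitSphereProd.symm
    (homeomorphUnitSphereProd E).toMeasurableEquiv).integrable_comp_of_integrable
      (g := fun x : ({0}ᶜ : Set E) => k x) ?_
  exact (integrableOn_iff_comap_subtypeVal (measurableSet_singleton _).compl).1 hk.integrableOn

lemma integral_comp_smul_sphere [Nontrivial E] [NormedSpace ℝ F] (k : E → F) :
    ∫ p : sphere (0 : E) 1 × Ioi (0 : ℝ), k (p.2.1 • p.1.1)
      ∂(μ.toSphere.prod (.volumeIoiPow (Module.finrank ℝ E - 1))) = ∫ x, k x ∂μ := by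
  have hmp := μ.measurePreserving_homeomorphUnitSphereProd.symm
    (homeomorphUnitSphereProd E).toMeasurableEquiv
  have := integral_subtype_comap (μ := μ) (measurableSet_singleton (0 : E)).compl k
  rw [restrict_compl_singleton] at this
  rw [← this]
  exact hmp.integral_comp' (fun x : ({0}ᶜ : Set E) => k x)

variable {N : ℕ}

lemma integral_toSphere_smul_eq_sphereInt (k : Euc N → ℝ) {r : ℝ} (hr : 0 < r) :
    (ENNReal.ofReal (r ^ (N - 1))).toReal •
      ∫ ω : sphere (0 : Euc N) 1, k (r • ω.1) ∂(volume : Measure (Euc N)).toSphere =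
        sphereInt N k r := by
  rw [ENNReal.toReal_ofReal (by positivity), smul_eq_mul, mul_comm, ← integral_mul_const]
  rfl

lemma integrableOn_sphereInt {k : Euc N → ℝ} (hk : Integrable k) :
    IntegrableOn (sphereInt N k) (Ioi 0) := by
  have h_int := (integrable_comp_smul_sphere hk).integral_prod_right
  rw [Measure.volumeIoiPow, integrable_withDensity_iff_integrable_smul' (by fun_prop) (by simp),
    finrank_euclideanSpace_fin] at h_int
  rw [integrableOn_iff_comap_subtypeVal measurableSet_Ioi]
  exact h_int.congr (ae_of_all _ fun r => integral_toSphere_smul_eq_sphereInt k r.2)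

variable [NeZero N]

theorem integral_eq_integral_Ioi_sphereInt {k : Euc N → ℝ} (hk : Integrable k) :
    ∫ x, k x = ∫ r in Ioi 0, sphereInt N k r := by
  rw [← integral_comp_smul_sphere, integral_prod_symm _ (integrable_comp_smul_sphere hk),
    Measure.volumeIoiPow, integral_withDensity_eq_integral_toReal_smul (by fun_prop) (by simp),
    finrank_euclideanSpace_fin, ← integral_subtype_comap measurableSet_Ioi]
  exact integral_congr_ae (ae_of_all _ fun r => integral_toSphere_smul_eq_sphereInt k r.2)

end PolarCoordinates

section RadialFunctions

variable {E : Type*} [NormedAddCommGroup E] {η : ℝ → ℝ}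

lemma hasCompactSupport_comp_norm [ProperSpace E] (hη : ∀ᶠ r in atTop, η r = 0) :
    HasCompactSupport fun x : E => η ‖x‖ := by
  rw [hasCompactSupport_iff_eventuallyEq, coclosedCompact_eq_cocompact]
  exact tendsto_norm_cocompact_atTop.eventually hη

variable [InnerProductSpace ℝ E]

lemma contDiff_comp_norm {n : WithTop ℕ∞} (hη : ContDiff ℝ n η)
    (hη_zero : ∀ᶠ r in 𝓝 0, η r = η 0) : ContDiff ℝ n (fun x : E => η ‖x‖) := by
  refine contDiff_iff_contDiffAt.2 fun x => ?_
  rcases eq_or_ne x 0 with rfl | hx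
  · have hconst : ∀ᶠ x : E in 𝓝 0, η ‖x‖ = η 0 :=
      (tendsto_norm_zero (E := E)).eventually hη_zero
    exact contDiffAt_const.congr_of_eventuallyEq hconst
  · exact hη.contDiffAt.comp x (contDiffAt_norm ℝ hx)

lemma fderiv_comp_norm (hη : Differentiable ℝ η) (hη_zero : ∀ᶠ r in 𝓝 0, η r = η 0) (x e : E) :
    fderiv ℝ (fun x : E => η ‖x‖) x e = deriv η ‖x‖ * inner ℝ e (‖x‖⁻¹ • x) := by
  rcases eq_or_ne x 0 with rfl | hx
  · have hconst : (fun x : E => η ‖x‖) =ᶠ[𝓝 0] fun _ => η 0 :=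
      (tendsto_norm_zero (E := E)).eventually hη_zero
    simp [hconst.fderiv_eq]
  · have hnorm : HasFDerivAt (fun y : E => ‖y‖) (‖x‖⁻¹ • innerSL ℝ x) x := by
      simpa [Real.rpow_neg_one, show (1 : ℝ) - 2 = -1 by norm_num] using
        hasFDerivAt_norm_rpow_of_ne_zero hx 1
    have hderiv : HasFDerivAt (fun x : E => η ‖x‖) _ x :=
      (hη ‖x‖).hasDerivAt.comp_hasFDerivAt x hnorm
    simp [hderiv.fderiv, inner_smul_right, real_inner_comm]

end RadialFunctions

section Flux

variable {N : ℕ}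

/-- The outward flux `∫_{∂B_R} ⟨X, ν⟩ dσ` of a vector field through the sphere of radius `R`
about the origin. -/
def flux (X : Euc N → Euc N) (R : ℝ) : ℝ :=
  sphereInt N (fun x => inner ℝ (X x) (‖x‖⁻¹ • x)) R

lemma norm_smul_sphere {R : ℝ} (hR : 0 ≤ R) (ω : sphere (0 : Euc N) 1) : ‖R • (ω : Euc N)‖ = R := by
  simp [norm_smul, abs_of_nonneg hR]

lemma sphereInt_congr {k l : Euc N → ℝ} {R : ℝ} (hR : 0 ≤ R) (h : ∀ x, ‖x‖ = R → k x = l x) :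
    sphereInt N k R = sphereInt N l R :=
  integral_congr_ae (ae_of_all _ fun ω => by simp only [h _ (norm_smul_sphere hR ω)])

lemma sphereInt_const_mul (c : ℝ) (k : Euc N → ℝ) (R : ℝ) :
    sphereInt N (fun x => c * k x) R = c * sphereInt N k R := by
  simp only [sphereInt, mul_assoc, integral_const_mul]

lemma sphereInt_comp_norm_mul (η : ℝ → ℝ) (k : Euc N → ℝ) {R : ℝ} (hR : 0 ≤ R) :
    sphereInt N (fun x => η ‖x‖ * k x) R = η R * sphereInt N k R := by
  rw [← sphereInt_const_mul]
  exact sphereInt_congr hR fun x hx => by rw [hx]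

lemma continuous_integral_toSphere {G : ℝ → sphere (0 : Euc N) 1 → ℝ}
    (hG : Continuous (Function.uncurry G)) :
    Continuous fun R => ∫ ω, G R ω ∂(volume : Measure (Euc N)).toSphere := by
  simpa using continuous_parametric_integral_of_continuous hG isCompact_univ

lemma continuous_sphereInt {k : Euc N → ℝ} (hk : Continuous k) : Continuous (sphereInt N k) :=
  continuous_integral_toSphere (by unfold Function.uncurry; fun_prop)

lemma flux_eq_integral_inner (X : Euc N → Euc N) {R : ℝ} (hR : 0 < R) :
    flux X R = ∫ ω : sphere (0 : Euc N) 1, inner ℝ (X (R • ω.1)) ω.1 * R ^ (N - 1)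
      ∂(volume : Measure (Euc N)).toSphere :=
  integral_congr_ae (ae_of_all _ fun ω => by
    simp only [norm_smul_sphere hR.le, inv_smul_smul₀ hR.ne'])

lemma continuousOn_flux {X : Euc N → Euc N} (hX : Continuous X) :
    ContinuousOn (flux X) (Ioi 0) := by
  refine ContinuousOn.congr (Continuous.continuousOn ?_) fun R hR => flux_eq_integral_inner X hR
  exact continuous_integral_toSphere (by unfold Function.uncurry; fun_prop)

lemma integral_comp_norm_mul [NeZero N] {η : ℝ → ℝ} {k : Euc N → ℝ}
    (hk : Integrable fun x => η ‖x‖ * k x) :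
    ∫ x, η ‖x‖ * k x = ∫ r in Ioi 0, η r * sphereInt N k r := by
  rw [integral_eq_integral_Ioi_sphereInt hk]
  exact setIntegral_congr_fun measurableSet_Ioi fun r hr =>
    sphereInt_comp_norm_mul η k (mem_Ioi.1 hr).le

theorem integral_deriv_mul_flux [NeZero N] {X : Euc N → Euc N} (hX : ContDiff ℝ 1 X) {η : ℝ → ℝ}
    (hη : ContDiff ℝ 1 η) (hη_zero : ∀ᶠ r in 𝓝 0, η r = η 0) (hη_top : ∀ᶠ r in atTop, η r = 0) :
    ∫ r in Ioi 0, deriv η r * flux X r =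
      -∫ r in Ioi 0, η r * sphereInt N (divergence X) r := by
  set ζ : Euc N → ℝ := fun x => η ‖x‖
  have hζ : ContDiff ℝ 1 ζ := contDiff_comp_norm hη hη_zero
  have hζ_supp : HasCompactSupport ζ := hasCompactSupport_comp_norm hη_top
  have hζ' : ∀ x, fderiv ℝ ζ x (X x) = deriv η ‖x‖ * inner ℝ (X x) (‖x‖⁻¹ • x) :=
    fun x => fderiv_comp_norm (hη.differentiable one_ne_zero) hη_zero x (X x)
  have h_int₁ : Integrable fun x => fderiv ℝ ζ x (X x) := by
    refine ((hζ.continuous_fderiv one_ne_zero).clm_apply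
      hX.continuous).integrable_of_hasCompactSupport ?_
    exact (hζ_supp.fderiv ℝ).mono fun x hx h => hx (by simp [h])
  have h_int₂ : Integrable fun x => ζ x * divergence X x :=
    (hζ.continuous.mul (continuous_divergence hX)).integrable_of_hasCompactSupport
      hζ_supp.mul_right
  have hdiv : ∫ x, (fderiv ℝ ζ x (X x) + ζ x * divergence X x) = 0 := by
    rw [← integral_divergence_eq_zero (μ := volume) (hζ.smul hX) hζ_supp.smul_right]
    exact integral_congr_ae (ae_of_all _ fun x =>
      (divergence_smul (hζ.differentiable one_ne_zero x) (hX.differentiable one_ne_zero x)).symm)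
  simp_rw [integral_add h_int₁ h_int₂, hζ'] at hdiv h_int₁
  rw [integral_comp_norm_mul h_int₁, integral_comp_norm_mul h_int₂] at hdiv
  exact eq_neg_of_add_eq_zero_left hdiv

end Flux

section DivergenceTheorem

lemma integrableOn_Ioi_of_eventually_eq_zero {k : ℝ → ℝ} (hk : Continuous k)
    (hk_top : ∀ᶠ r in atTop, k r = 0) (a : ℝ) : IntegrableOn k (Ioi a) := by
  refine ((hk.locallyIntegrable.locallyIntegrableOn (Ici a)).integrableOn_of_isBigO_atTop
    (g := fun _ => (0 : ℝ)) ?_ ?_).mono_set Ioi_subset_Ici_self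
  · exact (show k =ᶠ[atTop] fun _ => 0 from hk_top).trans_isBigO (Asymptotics.isBigO_refl _ _)
  · exact (integrable_zero ℝ ℝ volume).integrableAtFilter _

lemma eventually_atTop_deriv_eq_zero {η : ℝ → ℝ} (hη : ∀ᶠ r in atTop, η r = 0) :
    ∀ᶠ r in atTop, deriv η r = 0 := by
  obtain ⟨B, hB⟩ := eventually_atTop.1 hη
  filter_upwards [eventually_gt_atTop B] with r hr
  have hlocal : η =ᶠ[𝓝 r] fun _ => 0 := by
    filter_upwards [lt_mem_nhds hr] with t ht using hB t ht.le
  simp [hlocal.deriv_eq]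

lemma integral_deriv_mul_primitive {η D : ℝ → ℝ} (hη : ContDiff ℝ 1 η)
    (hη_top : ∀ᶠ r in atTop, η r = 0) (hD : Continuous D) :
    ∫ r in Ioi 0, deriv η r * ∫ s in (0 : ℝ)..r, D s = -∫ r in Ioi 0, η r * D r := by
  set P : ℝ → ℝ := fun r => ∫ s in (0 : ℝ)..r, D s
  have hP : ∀ r, HasDerivAt P (D r) r := fun r => (hD.integral_hasStrictDerivAt 0 r).hasDerivAt
  have hP_cont : Continuous P := continuous_iff_continuousAt.2 fun r => (hP r).continuousAt
  have hη_deriv : ∀ r, HasDerivAt η (deriv η r) r := fun r =>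
    (hη.differentiable one_ne_zero r).hasDerivAt
  have hηP_cont : Continuous (η * P) := hη.continuous.mul hP_cont
  have hparts := integral_Ioi_mul_deriv_eq_deriv_mul (a := 0) (fun r _ => hη_deriv r)
    (fun r _ => hP r)
    (integrableOn_Ioi_of_eventually_eq_zero (hη.continuous.mul hD)
      (hη_top.mono fun r hr => by simp [hr]) 0)
    (integrableOn_Ioi_of_eventually_eq_zero ((hη.continuous_deriv le_rfl).mul hP_cont)
      ((eventually_atTop_deriv_eq_zero hη_top).mono fun r hr => by simp [hr]) 0)
    ((hηP_cont.tendsto 0).mono_left nhdsWithin_le_nhds)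
    (tendsto_const_nhds (x := (0 : ℝ)) |>.congr' (hη_top.mono fun r hr => by simp [hr]))
  simp only [Pi.mul_apply, P, intervalIntegral.integral_same, mul_zero, sub_zero, zero_sub]
    at hparts
  linarith

lemma exists_deriv_eq_of_hasCompactSupport {g : ℝ → ℝ} (hg : Continuous g)
    (hg_supp : HasCompactSupport g) (hg_zero : 0 ∉ tsupport g) :
    ∃ η : ℝ → ℝ, ContDiff ℝ 1 η ∧ deriv η = g ∧ (∀ᶠ r in 𝓝 0, η r = η 0) ∧
      ∀ᶠ r in atTop, η r = 0 := by
  obtain ⟨B, hB⟩ : ∃ B, ∀ r ≥ B, g r = 0 := eventually_atTop.1 <| by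
    rw [hasCompactSupport_iff_eventuallyEq, coclosedCompact_eq_cocompact] at hg_supp
    exact atTop_le_cocompact hg_supp
  have hderiv : ∀ r, HasDerivAt (fun r => ∫ t in B..r, g t) (g r) r := fun r =>
    (hg.integral_hasStrictDerivAt B r).hasDerivAt
  have hderiv_eq : deriv (fun r => ∫ t in B..r, g t) = g := funext fun r => (hderiv r).deriv
  refine ⟨fun r => ∫ t in B..r, g t, ?_, hderiv_eq, ?_, ?_⟩
  · exact contDiff_one_iff_deriv.2 ⟨fun r => (hderiv r).differentiableAt, hderiv_eq.symm ▸ hg⟩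
  · obtain ⟨ε, hε, hball⟩ := Metric.eventually_nhds_iff_ball.1
      (notMem_tsupport_iff_eventuallyEq.1 hg_zero)
    filter_upwards [ball_mem_nhds 0 hε] with r hr
    rw [← sub_eq_zero, intervalIntegral.integral_interval_sub_left
      (hg.intervalIntegrable _ _) (hg.intervalIntegrable _ _)]
    exact intervalIntegral.integral_zero_ae (ae_of_all _ fun t ht => hball t <|
      (convex_ball (0 : ℝ) ε).ordConnected.uIcc_subset (mem_ball_self hε) hr
        (uIoc_subset_uIcc ht))
  · filter_upwards [eventually_ge_atTop B] with r hr
    refine intervalIntegral.integral_zero_ae (ae_of_all _ fun t ht => hB t ?_)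
    exact (uIoc_of_le hr ▸ ht).1.le

lemma integral_mul_eq_zero_of_forall_deriv {F D : ℝ → ℝ} (hF : ContinuousOn F (Ioi 0))
    (hD : Continuous D)
    (hFD : ∀ η : ℝ → ℝ, ContDiff ℝ 1 η → (∀ᶠ r in 𝓝 0, η r = η 0) → (∀ᶠ r in atTop, η r = 0) →
      ∫ r in Ioi 0, deriv η r * F r = -∫ r in Ioi 0, η r * D r)
    {g : ℝ → ℝ} (hg : Continuous g) (hg_supp : HasCompactSupport g) (hg_pos : tsupport g ⊆ Ioi 0) :
    ∫ r, g r * (F r - ∫ s in (0 : ℝ)..r, D s) = 0 := by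
  set P : ℝ → ℝ := fun r => ∫ s in (0 : ℝ)..r, D s
  have hP : Continuous P := intervalIntegral.continuous_primitive hD.intervalIntegrable 0
  have h_int : ∀ k : ℝ → ℝ, ContinuousOn k (Ioi 0) → Integrable fun r => g r * k r := by
    intro k hk
    have hcont : Continuous fun r => g r * k r :=
      (hg.continuousOn.mul hk).continuous_of_tsupport_subset isOpen_Ioi
        (tsupport_mul_subset_left.trans hg_pos)
    exact hcont.integrable_of_hasCompactSupport hg_supp.mul_right
  have hsupp : ∀ k : ℝ → ℝ, ∫ r in Ioi 0, g r * k r = ∫ r, g r * k r := fun k =>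
    setIntegral_eq_integral_of_forall_compl_eq_zero fun r hr => by
      rw [image_eq_zero_of_notMem_tsupport fun h => hr (hg_pos h), zero_mul]
  obtain ⟨η, hη, rfl, hη_zero, hη_top⟩ :=
    exists_deriv_eq_of_hasCompactSupport hg hg_supp fun h => lt_irrefl (0 : ℝ) (hg_pos h)
  simp_rw [mul_sub]
  rw [integral_sub (h_int F hF) (h_int P hP.continuousOn), ← hsupp, ← hsupp,
    hFD η hη hη_zero hη_top, integral_deriv_mul_primitive hη hη_top hD, sub_self]

theorem eqOn_primitive_of_forall_integral_deriv_mul {F D : ℝ → ℝ} (hF : ContinuousOn F (Ioi 0))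
    (hD : Continuous D)
    (hFD : ∀ η : ℝ → ℝ, ContDiff ℝ 1 η → (∀ᶠ r in 𝓝 0, η r = η 0) → (∀ᶠ r in atTop, η r = 0) →
      ∫ r in Ioi 0, deriv η r * F r = -∫ r in Ioi 0, η r * D r) :
    EqOn F (fun R => ∫ r in (0 : ℝ)..R, D r) (Ioi 0) := by
  have hP : Continuous fun R => ∫ r in (0 : ℝ)..R, D r :=
    intervalIntegral.continuous_primitive hD.intervalIntegrable 0
  have hae : ∀ᵐ r : ℝ, r ∈ Ioi (0 : ℝ) → F r - ∫ s in (0 : ℝ)..r, D s = 0 :=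
    isOpen_Ioi.ae_eq_zero_of_integral_contDiff_smul_eq_zero
      ((hF.sub hP.continuousOn).locallyIntegrableOn measurableSet_Ioi) fun g hg hg_supp hg_pos =>
      integral_mul_eq_zero_of_forall_deriv hF hD hFD hg.continuous hg_supp hg_pos
  refine Measure.eqOn_open_of_ae_eq (μ := volume) ?_ isOpen_Ioi hF hP.continuousOn
  rw [EventuallyEq, ae_restrict_iff' measurableSet_Ioi]
  exact hae.mono fun r hr hr_pos => sub_eq_zero.1 (hr hr_pos)

variable {N : ℕ} [NeZero N]

lemma setIntegral_ball_eq_intervalIntegral_sphereInt {k : Euc N → ℝ} (hk : Continuous k) {R : ℝ}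
    (hR : 0 ≤ R) : ∫ x in ball 0 R, k x = ∫ r in (0 : ℝ)..R, sphereInt N k r := by
  have hball : (ball 0 R).indicator k = fun x => (Iio R).indicator 1 ‖x‖ * k x := by
    funext x
    by_cases hx : ‖x‖ < R <;> simp [hx]
  have h_int : Integrable fun x => (Iio R).indicator 1 ‖x‖ * k x := by
    rw [← hball, integrable_indicator_iff measurableSet_ball]
    exact (hk.continuousOn.integrableOn_compact (isCompact_closedBall 0 R)).mono_set
      ball_subset_closedBall
  rw [← integral_indicator measurableSet_ball, hball, integral_comp_norm_mul h_int,
    intervalIntegral.integral_of_le hR, integral_Ioc_eq_integral_Ioo, ← Ioi_inter_Iio,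
    ← setIntegral_indicator measurableSet_Iio]
  simp_rw [← indicator_mul_left, Pi.one_apply, one_mul]

theorem flux_eq_setIntegral_divergence {X : Euc N → Euc N} (hX : ContDiff ℝ 1 X) {R : ℝ}
    (hR : 0 < R) : flux X R = ∫ x in ball 0 R, divergence X x := by
  have hdiv : Continuous (divergence X) := continuous_divergence hX
  rw [setIntegral_ball_eq_intervalIntegral_sphereInt hdiv hR.le]
  exact eqOn_primitive_of_forall_integral_deriv_mul (continuousOn_flux hX.continuous)
    (continuous_sphereInt hdiv) (fun η hη => integral_deriv_mul_flux hX hη) hR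

end DivergenceTheorem

section VanishingFlux

lemma eq_zero_of_tendsto_of_integrableAtFilter_div {F : ℝ → ℝ} {L : ℝ}
    (hF : Tendsto F atTop (𝓝 L)) (h_int : IntegrableAtFilter (fun r => F r / r) atTop) : L = 0 := by
  by_contra hL
  have hone : (fun _ : ℝ => (1 : ℝ)) =O[atTop] F :=
    (Asymptotics.isBigO_const_left_iff_pos_le_norm one_ne_zero).2
      ⟨‖L‖ / 2, half_pos (norm_pos_iff.2 hL),
        hF.norm.eventually (le_mem_nhds (half_lt_self (norm_pos_iff.2 hL)))⟩
  have hinv : (fun r : ℝ => r⁻¹) =O[atTop] fun r => F r / r := by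
    simpa [div_eq_mul_inv] using hone.mul (Asymptotics.isBigO_refl (fun r : ℝ => r⁻¹) atTop)
  have hmeas : StronglyMeasurableAtFilter (fun r : ℝ => r⁻¹) atTop :=
    measurable_inv.stronglyMeasurable.stronglyMeasurableAtFilter
  have hcontra := hinv.integrableAtFilter hmeas h_int
  simp_rw [← Real.rpow_neg_one, integrableAtFilter_rpow_atTop_iff, lt_irrefl] at hcontra

variable {N : ℕ} {X : Euc N → Euc N}

lemma abs_flux_le (hX : Continuous X) {R : ℝ} (hR : 0 < R) :
    |flux X R| ≤ sphereInt N (fun x => ‖X x‖) R := by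
  have hcont : Continuous fun ω : sphere (0 : Euc N) 1 => ‖X (R • ω.1)‖ * R ^ (N - 1) := by fun_prop
  rw [flux_eq_integral_inner X hR, ← Real.norm_eq_abs]
  refine norm_integral_le_of_norm_le
    (hcont.integrable_of_hasCompactSupport (HasCompactSupport.of_compactSpace _))
    (ae_of_all _ fun ω => ?_)
  rw [norm_mul, Real.norm_of_nonneg (pow_nonneg hR.le _)]
  gcongr
  simpa using norm_inner_le_norm (𝕜 := ℝ) (X (R • ω.1)) ω.1

lemma integrableAtFilter_flux_div [NeZero N] (hX : Continuous X)
    (hX_int : Integrable fun x => ‖X x‖ / (1 + ‖x‖)) :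
    IntegrableAtFilter (fun R => flux X R / R) atTop := by
  have hmeas : StronglyMeasurableAtFilter (fun R => flux X R / R) atTop :=
    ⟨Ioi 0, Ioi_mem_atTop 0, ((continuousOn_flux hX).div continuousOn_id
      fun R hR => (mem_Ioi.1 hR).ne').aestronglyMeasurable measurableSet_Ioi⟩
  refine Asymptotics.IsBigO.integrableAtFilter (.of_bound 2 ?_) hmeas
    ⟨Ioi 0, Ioi_mem_atTop 0, integrableOn_sphereInt hX_int⟩
  filter_upwards [eventually_ge_atTop 1] with R hR
  have hR_pos : 0 < R := by linarith
  have hflux : |flux X R| ≤ sphereInt N (fun x => ‖X x‖) R := abs_flux_le hX hR_pos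
  have hradial : sphereInt N (fun x => ‖X x‖ / (1 + ‖x‖)) R
      = (1 + R)⁻¹ * sphereInt N (fun x => ‖X x‖) R := by
    simpa only [div_eq_inv_mul] using
      sphereInt_comp_norm_mul (fun r => (1 + r)⁻¹) (fun x => ‖X x‖) hR_pos.le
  rw [hradial, norm_div, norm_mul, Real.norm_eq_abs, Real.norm_of_nonneg hR_pos.le,
    Real.norm_of_nonneg (by positivity), Real.norm_of_nonneg ((abs_nonneg _).trans hflux),
    div_le_iff₀ hR_pos]
  calc |flux X R| ≤ sphereInt N (fun x => ‖X x‖) R := hflux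
    _ ≤ 2 * R / (1 + R) * sphereInt N (fun x => ‖X x‖) R :=
        le_mul_of_one_le_left ((abs_nonneg _).trans hflux)
          ((one_le_div (by positivity)).2 (by linarith))
    _ = 2 * ((1 + R)⁻¹ * sphereInt N (fun x => ‖X x‖) R) * R := by ring

theorem tendsto_flux_zero [NeZero N] (hX : ContDiff ℝ 1 X)
    (hdiv : Integrable (divergence X)) (hX_int : Integrable fun x => ‖X x‖ / (1 + ‖x‖)) :
    Tendsto (flux X) atTop (𝓝 0) := by
  have hlim : Tendsto (flux X) atTop (𝓝 (∫ x, divergence X x)) := by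
    refine ((aecover_ball (x := (0 : Euc N)) tendsto_id).integral_tendsto_of_countably_generated
      hdiv).congr' ?_
    filter_upwards [eventually_gt_atTop 0] with R hR
    exact (flux_eq_setIntegral_divergence hX hR).symm
  rwa [eq_zero_of_tendsto_of_integrableAtFilter_div hlim
    (integrableAtFilter_flux_div hX.continuous hX_int)] at hlim

end VanishingFlux

section Energy

lemma frequently_nonpos_of_hasDerivAt_of_tendsto_zero {m m' : ℝ → ℝ}
    (hm : ∀ᶠ R in atTop, HasDerivAt m (m' R) R) (hm_nonneg : ∀ R, 0 ≤ m R)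
    (hm_zero : Tendsto m atTop (𝓝 0)) : ∃ᶠ R in atTop, m' R ≤ 0 := by
  by_contra hpos
  simp only [not_frequently, not_le] at hpos
  obtain ⟨B, hB⟩ := eventually_atTop.1 (hm.and hpos)
  have hmono : StrictMonoOn m (Ici B) := by
    refine strictMonoOn_of_deriv_pos (convex_Ici B)
      (fun R hR => (hB R hR).1.continuousAt.continuousWithinAt) fun R hR => ?_
    have hR : B ≤ R := interior_subset hR
    simpa [(hB R hR).1.deriv] using (hB R hR).2
  have hge : ∀ᶠ R in atTop, m (B + 1) ≤ m R := by
    filter_upwards [eventually_ge_atTop (B + 1)] with R hR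
    exact hmono.monotoneOn (by simp) (mem_Ici.2 (by linarith)) hR
  have hgt : m B < m (B + 1) := hmono self_mem_Ici (by simp) (by simp)
  exact absurd (ge_of_tendsto hm_zero hge) (not_le.2 ((hm_nonneg B).trans_lt hgt))

variable {N : ℕ}

lemma tendsto_integral_smul_sphere_zero {k : Euc N → ℝ} (hk : Continuous k)
    (hk_zero : Tendsto k (cocompact _) (𝓝 0)) :
    Tendsto (fun R : ℝ => ∫ ω : sphere (0 : Euc N) 1, k (R • ω.1)
      ∂(volume : Measure (Euc N)).toSphere) atTop (𝓝 0) := by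
  have hray : ∀ ω : sphere (0 : Euc N) 1,
      Tendsto (fun R : ℝ => R • ω.1) atTop (cocompact (Euc N)) := fun ω => by
    rw [← cobounded_eq_cocompact, ← tendsto_norm_atTop_iff_cobounded]
    refine tendsto_id.congr' ?_
    filter_upwards [eventually_ge_atTop 0] with R hR using (norm_smul_sphere hR ω).symm
  have hbound : ∀ᶠ x in cocompact (Euc N), ‖k x‖ ≤ 1 :=
    hk_zero.norm.eventually (ge_mem_nhds (by simp))
  obtain ⟨B, hB, hfar⟩ := exists_forall_of_eventually_cocompact hbound
  rw [← integral_zero (sphere (0 : Euc N) 1) ℝ]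
  refine tendsto_integral_filter_of_dominated_convergence (fun _ => 1)
    (.of_forall fun R => (by fun_prop : Continuous fun ω : sphere (0 : Euc N) 1 =>
      k (R • ω.1)).aestronglyMeasurable)
    ((eventually_ge_atTop B).mono fun R hR => ae_of_all _ fun ω =>
      hfar _ (by rwa [norm_smul_sphere (hB.le.trans hR)]))
    (integrable_const 1) (ae_of_all _ fun ω => hk_zero.comp (hray ω))

lemma hasDerivAt_integral_smul_sphere {k : Euc N → ℝ} (hk : ContDiff ℝ 1 k) {R : ℝ} (hR : 0 < R) :
    HasDerivAt (fun r : ℝ => ∫ ω : sphere (0 : Euc N) 1, k (r • ω.1)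
      ∂(volume : Measure (Euc N)).toSphere) (flux (gradient k) R / R ^ (N - 1)) R := by
  have hk_cont : Continuous k := hk.continuous
  set k' : ℝ → sphere (0 : Euc N) 1 → ℝ := fun r ω => fderiv ℝ k (r • ω.1) ω.1
  have hk' : Continuous fun p : ℝ × sphere (0 : Euc N) 1 => k' p.1 p.2 :=
    ((hk.continuous_fderiv one_ne_zero).comp (by fun_prop)).clm_apply (by fun_prop)
  have hderiv : ∀ r ω, HasDerivAt (fun r : ℝ => k (r • ω.1)) (k' r ω) r := fun r ω => by
    have hray : HasDerivAt (fun r : ℝ => r • ω.1) ω.1 r := by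
      simpa using (hasDerivAt_id r).smul_const ω.1
    exact (hk.differentiable one_ne_zero _).hasFDerivAt.comp_hasDerivAt r hray
  obtain ⟨M, hM⟩ := ((isCompact_Icc (a := R - 1) (b := R + 1)).prod
    (isCompact_univ (X := sphere (0 : Euc N) 1))).bddAbove_image hk'.norm.continuousOn
  have hflux : flux (gradient k) R / R ^ (N - 1)
      = ∫ ω, k' R ω ∂(volume : Measure (Euc N)).toSphere := by
    rw [flux_eq_integral_inner _ hR, integral_mul_const,
      mul_div_cancel_right₀ _ (pow_pos hR _).ne']
    simp [k', gradient]
  rw [hflux]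
  refine (hasDerivAt_integral_of_dominated_loc_of_deriv_le (bound := fun _ => M)
    (Icc_mem_nhds (by linarith) (by linarith)) (.of_forall fun r => ?_) ?_ ?_
    (ae_of_all _ fun ω r hr => hM ⟨(r, ω), ⟨hr, mem_univ _⟩, rfl⟩) (integrable_const _)
    (ae_of_all _ fun ω r _ => hderiv r ω)).2
  · exact (by fun_prop : Continuous fun ω : sphere (0 : Euc N) 1 =>
      k (r • ω.1)).aestronglyMeasurable
  · exact (by fun_prop : Continuous fun ω : sphere (0 : Euc N) 1 =>
      k (R • ω.1)).integrable_of_hasCompactSupport (HasCompactSupport.of_compactSpace _)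
  · exact (hk'.comp (by fun_prop : Continuous fun ω : sphere (0 : Euc N) 1 =>
      (R, ω))).aestronglyMeasurable

lemma frequently_flux_gradient_nonpos {k : Euc N → ℝ} (hk : ContDiff ℝ 1 k) (hk_nonneg : 0 ≤ k)
    (hk_zero : Tendsto k (cocompact _) (𝓝 0)) : ∃ᶠ R in atTop, flux (gradient k) R ≤ 0 := by
  have hmean := frequently_nonpos_of_hasDerivAt_of_tendsto_zero
    ((eventually_gt_atTop 0).mono fun R hR => hasDerivAt_integral_smul_sphere hk hR)
    (fun R => integral_nonneg fun ω => hk_nonneg _)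
    (tendsto_integral_smul_sphere_zero hk.continuous hk_zero)
  refine (hmean.and_eventually (eventually_gt_atTop 0)).mono fun R ⟨hle, hR⟩ => ?_
  simpa using (div_le_iff₀ (pow_pos hR _)).1 hle

lemma integrable_of_frequently_setIntegral_ball_nonpos {D W : Euc N → ℝ} (hD : Continuous D)
    (hW : Integrable W) (hDW : 0 ≤ D + W)
    (hfreq : ∃ᶠ R in atTop, ∫ x in ball 0 R, D x ≤ 0) : Integrable D := by
  obtain ⟨R, hR, hD_nonpos⟩ := exists_seq_forall_of_frequently hfreq
  have hloc : ∀ n, IntegrableOn D (ball 0 (R n)) := fun n =>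
    (hD.continuousOn.integrableOn_compact (isCompact_closedBall 0 (R n))).mono_set
      ball_subset_closedBall
  have hsum : Integrable (D + W) :=
    (aecover_ball (x := (0 : Euc N)) hR).integrable_of_integral_bounded_of_nonneg_ae (∫ x, |W x|)
      (fun n => (hloc n).add hW.integrableOn) (ae_of_all _ hDW) (.of_forall fun n => by
        have hW_le : ∫ x in ball 0 (R n), W x ≤ ∫ x, |W x| :=
          (setIntegral_mono hW.integrableOn hW.abs.integrableOn fun x => le_abs_self _).trans
            (setIntegral_le_integral hW.abs (ae_of_all _ fun x => abs_nonneg _))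
        simp only [Pi.add_apply]
        rw [integral_add (hloc n) hW.integrableOn]
        linarith [hD_nonpos n])
  simpa using hsum.sub hW

theorem integrable_norm_gradient_sq_and_mul_laplacian [NeZero N] {u : Euc N → ℝ}
    (hu : ContDiff ℝ 2 u) (hu_zero : Tendsto u (cocompact _) (𝓝 0))
    (hneg : Integrable fun x => max (-(u x * Δ u x)) 0) :
    (Integrable fun x => ‖gradient u x‖ ^ 2) ∧ Integrable fun x => u x * Δ u x := by
  have hgrad : gradient (fun x => u x ^ 2 / 2) = fun x => u x • gradient u x :=
    funext fun x => gradient_sq_div_two (hu.differentiable two_ne_zero x)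
  have hX : ContDiff ℝ 1 fun x => u x • gradient u x :=
    (hu.of_le one_le_two).smul (contDiff_gradient hu)
  have hdiv : divergence (fun x => u x • gradient u x)
      = fun x => ‖gradient u x‖ ^ 2 + u x * Δ u x := by
    funext x
    rw [divergence_smul_gradient (hu.differentiable two_ne_zero) hu,
      real_inner_self_eq_norm_sq]
  have hD : Integrable fun x => ‖gradient u x‖ ^ 2 + u x * Δ u x := by
    rw [← hdiv]
    refine integrable_of_frequently_setIntegral_ball_nonpos (continuous_divergence hX) hneg
      (fun x => ?_) ?_
    · rw [hdiv, Pi.zero_apply, Pi.add_apply]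
      linarith [sq_nonneg ‖gradient u x‖, le_max_left (-(u x * Δ u x)) 0]
    · have hfreq := frequently_flux_gradient_nonpos (k := fun x => u x ^ 2 / 2)
        ((hu.of_le one_le_two).pow 2 |>.div_const 2) (fun x => by positivity)
        (by simpa using (hu_zero.pow 2).div_const 2)
      rw [hgrad] at hfreq
      refine (hfreq.and_eventually (eventually_gt_atTop 0)).mono fun R ⟨hle, hR⟩ => ?_
      rwa [← flux_eq_setIntegral_divergence hX hR]
  have hgrad_int : Integrable fun x => ‖gradient u x‖ ^ 2 := by
    refine (hD.add hneg).mono' ?_ (ae_of_all _ fun x => ?_)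
    · exact ((contDiff_gradient (n := 1) hu).continuous.norm.pow 2).aestronglyMeasurable
    · rw [Real.norm_of_nonneg (sq_nonneg _), Pi.add_apply]
      linarith [le_max_left (-(u x * Δ u x)) 0]
  exact ⟨hgrad_int, (hD.sub hgrad_int).congr (ae_of_all _ fun x => add_sub_cancel_left _ _)⟩

end Energy

section DecayingFunctions

variable {E : Type*} [NormedAddCommGroup E] [NormedSpace ℝ E] [FiniteDimensional ℝ E]
  [MeasurableSpace E] [BorelSpace E] {μ : Measure E} [μ.IsAddHaarMeasure]

lemma integrable_of_eventually_abs_le_norm_rpow {k : E → ℝ} {C p : ℝ} (hk : Continuous k)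
    (hp : Module.finrank ℝ E < p) (hk_decay : ∀ᶠ x in cocompact E, |k x| ≤ C * ‖x‖ ^ (-p)) :
    Integrable k μ := by
  have hp_pos : 0 < p := (Nat.cast_nonneg _).trans_lt hp
  refine hk.locallyIntegrable.integrable_of_isBigO_cocompact (.of_bound (|C| * 2 ^ p) ?_)
    ((integrable_one_add_norm hp).integrableAtFilter _)
  filter_upwards [hk_decay,
    (tendsto_norm_cocompact_atTop (E := E)).eventually_ge_atTop 1] with x hx hx_one
  have hx_pos : 0 < ‖x‖ := one_pos.trans_le hx_one
  have hdouble : ‖x‖ ^ (-p) ≤ 2 ^ p * (1 + ‖x‖) ^ (-p) := by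
    rw [← inv_inv (2 ^ p : ℝ), ← Real.rpow_neg zero_le_two, inv_mul_eq_div,
      le_div_iff₀ (by positivity), ← Real.mul_rpow hx_pos.le zero_le_two]
    exact Real.rpow_le_rpow_of_nonpos (by positivity) (by linarith) (neg_nonpos.2 hp_pos.le)
  calc |k x| ≤ |C| * ‖x‖ ^ (-p) :=
        hx.trans (mul_le_mul_of_nonneg_right (le_abs_self C) (by positivity))
    _ ≤ |C| * (2 ^ p * (1 + ‖x‖) ^ (-p)) := by gcongr
    _ = |C| * 2 ^ p * ‖(1 + ‖x‖) ^ (-p)‖ := by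
        rw [Real.norm_of_nonneg (by positivity), mul_assoc]

lemma integrable_of_eventually_abs_le_norm_rpow_mul_mul {k u v : E → ℝ} {a C D q s : ℝ}
    (hk : Continuous k) (ha : 0 ≤ a) (hqs : Module.finrank ℝ E < q + 2 * s) (hu : 0 ≤ u)
    (hv : 0 ≤ v) (hu_decay : ∀ᶠ x in cocompact E, u x ≤ C * ‖x‖ ^ (-s))
    (hv_decay : ∀ᶠ x in cocompact E, v x ≤ D * ‖x‖ ^ (-s))
    (hk_le : ∀ᶠ x in cocompact E, |k x| ≤ a * ‖x‖ ^ (-q) * (u x * v x)) : Integrable k μ := by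
  refine integrable_of_eventually_abs_le_norm_rpow (C := a * (C * D)) hk hqs ?_
  filter_upwards [hu_decay, hv_decay, hk_le,
    (tendsto_norm_cocompact_atTop (E := E)).eventually_gt_atTop 0] with x hux hvx hkx hx
  calc |k x| ≤ a * ‖x‖ ^ (-q) * (u x * v x) := hkx
    _ ≤ a * ‖x‖ ^ (-q) * ((C * ‖x‖ ^ (-s)) * (D * ‖x‖ ^ (-s))) := by
        gcongr
        exacts [hv x, (hu x).trans hux]
    _ = a * (C * D) * ‖x‖ ^ (-(q + 2 * s)) := by
        rw [show -(q + 2 * s) = -q + (-s + -s) by ring, Real.rpow_add hx, Real.rpow_add hx]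
        ring

end DecayingFunctions

section LogisticEquation

variable {N : ℕ}

lemma lap_eq_laplacian {u : Euc N → ℝ} (hu : ContDiff ℝ 2 u) (x : Euc N) : lap N u x = Δ u x := by
  have hu' : Differentiable ℝ (fderiv ℝ u) := (hu.fderiv_right le_rfl).differentiable one_ne_zero
  rw [laplacian_eq_sum_fderiv_fderiv (EuclideanSpace.basisFun (Fin N) ℝ)]
  simp [lap, fderiv_clm_apply (hu' _) (differentiableAt_const _)]

variable {V : Euc N → ℝ} {f : ℝ → ℝ} {lam : ℝ} {u v : Euc N → ℝ}

lemma IsSolution.laplacian_eq (hu : IsSolution N V f lam u) (x : Euc N) :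
    Δ u x = lam * (f (u x) - V x * u x) := by
  linarith [hu.eqn x, lap_eq_laplacian hu.smooth x]

lemma IsSolution.neg_laplacian_le (hu : IsSolution N V f lam u) (hf : ∀ t, 0 < t → 0 ≤ f t)
    (hlam : 0 ≤ lam) (x : Euc N) : -Δ u x ≤ lam * max (V x) 0 * u x := by
  have hfu := mul_nonneg hlam (hf _ (hu.pos x))
  have hV := mul_le_mul_of_nonneg_left (le_max_left (V x) 0) (mul_nonneg hlam (hu.pos x).le)
  rw [hu.laplacian_eq]
  linarith

lemma IsSolution.mul_laplacian_le (hf : MonotoneOn (fun t => f t / t) (Ioi 0)) (hlam : 0 ≤ lam)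
    (hu : IsSolution N V f lam u) (hv : IsSolution N V f lam v) (x : Euc N) :
    u x * Δ v x ≤ |u x * Δ u x| + |v x * Δ v x| := by
  have hfactor : ∀ {w}, IsSolution N V f lam w →
      Δ w x = w x * (lam * (f (w x) / w x - V x)) := fun {w} hw => by
    have := (hw.pos x).ne'
    rw [hw.laplacian_eq]
    field_simp
  have hux := hu.pos x
  have hvx := hv.pos x
  rw [hfactor hu, hfactor hv]
  set a := lam * (f (u x) / u x - V x)
  set b := lam * (f (v x) / v x - V x)
  rcases le_total (u x) (v x) with huv | hvu
  · calc u x * (v x * b) ≤ u x * (v x * |b|) := by gcongr; exact le_abs_self b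
      _ ≤ v x * (v x * |b|) := by gcongr
      _ = |v x * (v x * b)| := by simp only [abs_mul, abs_of_pos hvx]
      _ ≤ |u x * (u x * a)| + |v x * (v x * b)| := le_add_of_nonneg_left (abs_nonneg _)
  · have hba : b ≤ a :=
      mul_le_mul_of_nonneg_left (sub_le_sub_right (hf hvx hux hvu) _) hlam
    calc u x * (v x * b) ≤ u x * (v x * |a|) := by gcongr; exact hba.trans (le_abs_self a)
      _ ≤ u x * (u x * |a|) := by gcongr
      _ = |u x * (u x * a)| := by simp only [abs_mul, abs_of_pos hux]
      _ ≤ |u x * (u x * a)| + |v x * (v x * b)| := le_add_of_nonneg_right (abs_nonneg _)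

lemma IsSolution.exists_eventually_le_norm_rpow_neg (hdec : CondVDecay N V)
    (hf : ∀ t, 0 < t → 0 ≤ f t) (hlam : 0 ≤ lam) (hu : IsSolution N V f lam u) {s : ℝ}
    (hs : 0 < s) (hsN : s < N - 2) : ∃ C : ℝ, ∀ᶠ x in cocompact (Euc N), u x ≤ C * ‖x‖ ^ (-s) := by
  obtain ⟨A, α, -, hα, hV⟩ := hdec
  refine _root_.exists_eventually_le_norm_rpow_neg (A := lam * A) hα hs (by simpa using hsN)
    hu.smooth ?_ hu.decay
  filter_upwards [(tendsto_norm_cocompact_atTop (E := Euc N)).eventually_gt_atTop 0] with x hx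
  calc -Δ u x ≤ lam * max (V x) 0 * u x := hu.neg_laplacian_le hf hlam x
    _ ≤ lam * (A * ‖x‖ ^ (-2 - α)) * u x := by
        have := (hu.pos x).le
        gcongr
        exact hV x (norm_pos_iff.1 hx)
    _ = lam * A * ‖x‖ ^ (-2 - α) * u x := by ring

lemma IsSolution.integrable_max_neg_mul_laplacian (hN : 3 ≤ N) (hdec : CondVDecay N V)
    (hf : ∀ t, 0 < t → 0 ≤ f t) (hlam : 0 ≤ lam) (hu : IsSolution N V f lam u)
    (hv : IsSolution N V f lam v) : Integrable fun x => max (-(u x * Δ v x)) 0 := by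
  have hN' : (3 : ℝ) ≤ N := by exact_mod_cast hN
  have hs : 0 < 3 * ((N : ℝ) - 2) / 4 := by linarith
  obtain ⟨C, hC⟩ := hu.exists_eventually_le_norm_rpow_neg hdec hf hlam hs (by linarith)
  obtain ⟨D, hD⟩ := hv.exists_eventually_le_norm_rpow_neg hdec hf hlam hs (by linarith)
  obtain ⟨A, α, hA, hα, hV⟩ := hdec
  refine integrable_of_eventually_abs_le_norm_rpow_mul_mul (a := lam * A) (q := 2 + α)
    ((hu.smooth.continuous.mul (continuous_laplacian hv.smooth)).neg.max continuous_const)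
    (by positivity) (by simp; linarith) (fun x => (hu.pos x).le) (fun x => (hv.pos x).le) hC hD ?_
  filter_upwards [(tendsto_norm_cocompact_atTop (E := Euc N)).eventually_gt_atTop 0] with x hx
  have hux := (hu.pos x).le
  have hvx := (hv.pos x).le
  rw [abs_of_nonneg (le_max_right _ _)]
  refine max_le ?_ (by positivity)
  calc -(u x * Δ v x) = u x * -Δ v x := by ring
    _ ≤ u x * (lam * (A * ‖x‖ ^ (-2 - α)) * v x) := by
        gcongr
        refine (hv.neg_laplacian_le hf hlam x).trans ?_
        gcongr
        exact hV x (norm_pos_iff.1 hx)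
    _ = lam * A * ‖x‖ ^ (-(2 + α)) * (u x * v x) := by
        rw [neg_add, ← sub_eq_add_neg]
        ring

lemma IsSolution.integrable_sq_div_one_add_norm_sq (hN : 3 ≤ N) (hdec : CondVDecay N V)
    (hf : ∀ t, 0 < t → 0 ≤ f t) (hlam : 0 ≤ lam) (hu : IsSolution N V f lam u) :
    Integrable fun x => (u x / (1 + ‖x‖)) ^ 2 := by
  have hN' : (3 : ℝ) ≤ N := by exact_mod_cast hN
  have hs : 0 < 3 * ((N : ℝ) - 2) / 4 := by linarith
  obtain ⟨C, hC⟩ := hu.exists_eventually_le_norm_rpow_neg hdec hf hlam hs (by linarith)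
  refine integrable_of_eventually_abs_le_norm_rpow_mul_mul (a := 1) (q := 2)
    ((hu.smooth.continuous.div (by fun_prop) fun x => by positivity).pow 2) zero_le_one
    (by simp; linarith) (fun x => (hu.pos x).le) (fun x => (hu.pos x).le) hC hC ?_
  filter_upwards [(tendsto_norm_cocompact_atTop (E := Euc N)).eventually_gt_atTop 0] with x hx
  calc |(u x / (1 + ‖x‖)) ^ 2| = (u x / (1 + ‖x‖)) ^ 2 := abs_of_nonneg (sq_nonneg _)
    _ ≤ (u x / ‖x‖) ^ 2 := by
        have := (hu.pos x).le
        gcongr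
        linarith
    _ = 1 * ‖x‖ ^ (-2 : ℝ) * (u x * u x) := by
        rw [Real.rpow_neg hx.le, Real.rpow_two]
        ring

lemma IsSolution.integrable_norm_gradient_sq_and_mul_laplacian (hN : 3 ≤ N)
    (hdec : CondVDecay N V) (hf : ∀ t, 0 < t → 0 ≤ f t) (hlam : 0 ≤ lam)
    (hu : IsSolution N V f lam u) :
    (Integrable fun x => ‖gradient u x‖ ^ 2) ∧ Integrable fun x => u x * Δ u x :=
  have : NeZero N := ⟨by omega⟩
  _root_.integrable_norm_gradient_sq_and_mul_laplacian hu.smooth hu.decay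
    (hu.integrable_max_neg_mul_laplacian hN hdec hf hlam hu)

lemma IsSolution.integrable_mul_laplacian (hN : 3 ≤ N) (hdec : CondVDecay N V)
    (hf : ∀ t, 0 < t → 0 ≤ f t) (hf_mono : MonotoneOn (fun t => f t / t) (Ioi 0))
    (hlam : 0 ≤ lam) (hu : IsSolution N V f lam u) (hv : IsSolution N V f lam v) :
    Integrable fun x => u x * Δ v x := by
  obtain ⟨-, hu_int⟩ := hu.integrable_norm_gradient_sq_and_mul_laplacian hN hdec hf hlam
  obtain ⟨-, hv_int⟩ := hv.integrable_norm_gradient_sq_and_mul_laplacian hN hdec hf hlam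
  have hneg := hu.integrable_max_neg_mul_laplacian hN hdec hf hlam hv
  refine ((hu_int.abs.add hv_int.abs).add hneg).mono'
    (hu.smooth.continuous.mul (continuous_laplacian hv.smooth)).aestronglyMeasurable
    (ae_of_all _ fun x => ?_)
  have hupper := hu.mul_laplacian_le hf_mono hlam hv x
  simp only [Pi.add_apply]
  refine abs_le'.2 ⟨hupper.trans (le_add_of_nonneg_right (le_max_right _ _)), ?_⟩
  exact (le_max_left _ _).trans (le_add_of_nonneg_left (by positivity))

lemma IsSolution.integrable_divergence_smul_gradient (hN : 3 ≤ N) (hdec : CondVDecay N V)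
    (hf : ∀ t, 0 < t → 0 ≤ f t) (hf_mono : MonotoneOn (fun t => f t / t) (Ioi 0))
    (hlam : 0 ≤ lam) (hu : IsSolution N V f lam u) (hv : IsSolution N V f lam v) :
    Integrable (divergence fun x => u x • gradient v x) := by
  obtain ⟨hu_int, -⟩ := hu.integrable_norm_gradient_sq_and_mul_laplacian hN hdec hf hlam
  obtain ⟨hv_int, -⟩ := hv.integrable_norm_gradient_sq_and_mul_laplacian hN hdec hf hlam
  have hinner : Integrable fun x => inner ℝ (gradient u x) (gradient v x) := by
    refine (hu_int.add hv_int).mono' (Continuous.aestronglyMeasurable ?_) (ae_of_all _ fun x => ?_)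
    · exact (contDiff_gradient (n := 1) hu.smooth).continuous.inner
        (contDiff_gradient (n := 1) hv.smooth).continuous
    · rw [Pi.add_apply]
      nlinarith [norm_inner_le_norm (𝕜 := ℝ) (gradient u x) (gradient v x),
        sq_nonneg (‖gradient u x‖ - ‖gradient v x‖)]
  rw [funext (divergence_smul_gradient (hu.smooth.differentiable two_ne_zero) hv.smooth)]
  exact hinner.add (hu.integrable_mul_laplacian hN hdec hf hf_mono hlam hv)

lemma IsSolution.integrable_norm_smul_gradient_div (hN : 3 ≤ N) (hdec : CondVDecay N V)
    (hf : ∀ t, 0 < t → 0 ≤ f t) (hlam : 0 ≤ lam) (hu : IsSolution N V f lam u)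
    (hv : IsSolution N V f lam v) : Integrable fun x => ‖u x • gradient v x‖ / (1 + ‖x‖) := by
  obtain ⟨hv_int, -⟩ := hv.integrable_norm_gradient_sq_and_mul_laplacian hN hdec hf hlam
  refine ((hu.integrable_sq_div_one_add_norm_sq hN hdec hf hlam).add hv_int).mono'
    (Continuous.aestronglyMeasurable ?_) (ae_of_all _ fun x => ?_)
  · exact (hu.smooth.continuous.smul (contDiff_gradient (n := 1) hv.smooth).continuous).norm.div
      (by fun_prop) fun x => by positivity
  · have hfactor : ‖u x • gradient v x‖ / (1 + ‖x‖) = u x / (1 + ‖x‖) * ‖gradient v x‖ := by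
      rw [norm_smul, Real.norm_of_nonneg (hu.pos x).le]
      ring
    rw [Real.norm_of_nonneg (by positivity), hfactor, Pi.add_apply]
    nlinarith [sq_nonneg (u x / (1 + ‖x‖)), sq_nonneg ‖gradient v x‖,
      sq_nonneg (u x / (1 + ‖x‖) - ‖gradient v x‖)]

theorem stmt12_general (hN : 3 ≤ N) (hdec : CondVDecay N V) (hf : ∀ t, 0 < t → 0 ≤ f t)
    (hf_mono : MonotoneOn (fun t => f t / t) (Ioi 0)) (hlam : 0 ≤ lam)
    (hu : IsSolution N V f lam u) (hv : IsSolution N V f lam v) :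
    Tendsto (fun R => sphereInt N (fun x => u x * inner ℝ (gradient v x) (‖x‖⁻¹ • x)) R)
      atTop (𝓝 0) := by
  have : NeZero N := ⟨by omega⟩
  have hX : ContDiff ℝ 1 fun x => u x • gradient v x :=
    (hu.smooth.of_le one_le_two).smul (contDiff_gradient hv.smooth)
  refine (tendsto_flux_zero hX (hu.integrable_divergence_smul_gradient hN hdec hf hf_mono hlam hv)
    (hu.integrable_norm_smul_gradient_div hN hdec hf hlam hv)).congr fun R => ?_
  simp only [flux, real_inner_smul_left]

end LogisticEquation

/-- for two solutions `u`, `v` of `(P_λ)`, the boundary flux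
`∫_{∂B_R} u ∂v/∂ν dσ` tends to zero as `R → ∞`. -/
theorem stmt12 (N : ℕ) (hN : 3 ≤ N) (V V₁ V₂ : Euc N → ℝ)
    (hV : CondV N V V₁ V₂) (hdec : CondVDecay N V)
    (f : ℝ → ℝ) (hf : CondF N V f)
    (lam : ℝ) (hlam : 0 < lam)
    (u v : Euc N → ℝ) (hu : IsSolution N V f lam u) (hv : IsSolution N V f lam v) :
    Tendsto (fun R : ℝ =>
        sphereInt N (fun x => u x * (inner ℝ (gradient v x) (‖x‖⁻¹ • x) : ℝ)) R)
      atTop (𝓝 0) := by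
  obtain ⟨-, hf_nonneg, -, -, -, hf_mono, -⟩ := hf
  exact stmt12_general hN hdec (fun t ht => hf_nonneg t ht.le) hf_mono.monotoneOn hlam.le hu hv

end
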